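/- Let 𝒟 be regularly varying with exponent γ > 1 and let {G_n}_{n≥1} be generated by the erased configuration model with degree sequences IID(𝒟), coupled with the underlying configuration model multigraph. Then for any δ > 0 and any k such that f^*(k) > 0 (where f^*(k) = k f(k)/E[𝒟] and f is the density of 𝒟), lim_{n→∞} P(|Θ̂_n(k) − Θ_n(k)| > δ) = 0, where Θ_n is the average nearest neighbor rank computed on the configuration model multigraph and Θ̂_n is the one computed on the erased graph. -/

import Mathlib

open MeasureTheory Filter
open scoped ENNReal NNReal BigOperators

namespace ANNDPaper

/-- A function is slowly varying if `l (λ x) / l x → 1` as `x → ∞` for every `λ > 0`. -/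
def SlowlyVarying (l : ℝ → ℝ) : Prop :=
  ∀ lam : ℝ, 0 < lam → Tendsto (fun x => l (lam * x) / l x) atTop (nhds 1)

/-- A function is eventually monotone if it is monotone on some interval `[K, ∞)`. -/
def EventuallyMonotone (l : ℝ → ℝ) : Prop :=
  ∃ K : ℝ, MonotoneOn l (Set.Ici K) ∨ AntitoneOn l (Set.Ici K)

/-- Cumulative distribution function of a mass function on `ℕ`. -/
noncomputable def cdfOf (f : ℕ → ℝ) (k : ℕ) : ℝ := ∑ j ∈ Finset.range (k + 1), f j

/-- Kantorovich–Rubinstein distance between two mass functions on `ℕ`,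
valued in `ℝ≥0∞`. -/
noncomputable def d1 (f g : ℕ → ℝ) : ℝ≥0∞ :=
  ∑' k : ℕ, ENNReal.ofReal |cdfOf f k - cdfOf g k|

/-- Total variation distance between two mass functions on `ℕ`, valued in `ℝ≥0∞`. -/
noncomputable def dtv (f g : ℕ → ℝ) : ℝ≥0∞ :=
  (∑' k : ℕ, ENNReal.ofReal |f k - g k|) / 2

/-- Mean of a mass function on `ℕ`. -/
noncomputable def meanPMF (f : ℕ → ℝ) : ℝ := ∑' k : ℕ, (k : ℝ) * f k

/-- Size-biased version `f^*(k) = k f(k) / E[f]` of a mass function on `ℕ`. -/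
noncomputable def sizeBiased (f : ℕ → ℝ) (k : ℕ) : ℝ := (k : ℝ) * f k / meanPMF f

/-- `L_n`, the sum of the degrees. -/
def degSum {n : ℕ} (d : Fin n → ℕ) : ℕ := ∑ i, d i

/-- Empirical degree density `f_n(k)`. -/
noncomputable def empDens {n : ℕ} (d : Fin n → ℕ) (k : ℕ) : ℝ :=
  (∑ i, if d i = k then (1 : ℝ) else 0) / (n : ℝ)

/-- Size-biased empirical degree density `f_n^*(k)`. -/
noncomputable def empSB {n : ℕ} (d : Fin n → ℕ) (k : ℕ) : ℝ :=
  (∑ i, if d i = k then (k : ℝ) else 0) / (degSum d : ℝ)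

/-- Size-biased empirical cumulative distribution function `F_n^*(ℓ)`. -/
noncomputable def empSBcdf {n : ℕ} (d : Fin n → ℕ) (l : ℕ) : ℝ :=
  (∑ i, if d i ≤ l then (d i : ℝ) else 0) / (degSum d : ℝ)

/-- Empirical joint degree distribution `h_n(k, ℓ)` of a multigraph with degrees `d`
and edge counts `g` (self-loops counted twice). -/
noncomputable def jointDens {n : ℕ} (d : Fin n → ℕ) (g : Fin n → Fin n → ℕ) (k l : ℕ) : ℝ :=
  (∑ i, ∑ j, if d i = k ∧ d j = l then (g i j : ℝ) else 0) / (degSum d : ℝ)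

/-- Average nearest neighbor degree `Φ_n(k)`. -/
noncomputable def ANND {n : ℕ} (d : Fin n → ℕ) (g : Fin n → Fin n → ℕ) (k : ℕ) : ℝ :=
  if 0 < empDens d k then (∑' l : ℕ, jointDens d g k l * (l : ℝ)) / empSB d k else 0

/-- Average nearest neighbor rank `Θ_n(k)`. -/
noncomputable def ANNR {n : ℕ} (d : Fin n → ℕ) (g : Fin n → Fin n → ℕ) (k : ℕ) : ℝ :=
  if 0 < empDens d k then (∑' l : ℕ, jointDens d g k l * empSBcdf d l) / empSB d k else 0

/-- The degree of node `i` in a multigraph with edge counts `g` (self-loops counted twice). -/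
def degOf {n : ℕ} (g : Fin n → Fin n → ℕ) (i : Fin n) : ℕ := ∑ j, g i j

/-- Erased edge counts: self-loops removed, multiple edges merged. -/
def erase {n : ℕ} (g : Fin n → Fin n → ℕ) (i j : Fin n) : ℕ :=
  if i = j then 0 else min (g i j) 1

/-- Degrees after erasure. -/
def eraseDeg {n : ℕ} (g : Fin n → Fin n → ℕ) (i : Fin n) : ℕ := ∑ j, erase g i j

/-- The stubs (half-edges) attached to the nodes, given a degree sequence `d`. -/
abbrev Stubs {n : ℕ} (d : Fin n → ℕ) : Type := (i : Fin n) × Fin (d i)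

/-- A perfect matching of the stubs: a fixed-point-free involution. -/
def Matching {n : ℕ} (d : Fin n → ℕ) : Type :=
  {σ : Equiv.Perm (Stubs d) // ∀ s, σ s ≠ s ∧ σ (σ s) = s}

instance {n : ℕ} (d : Fin n → ℕ) : MeasurableSpace (Matching d) := ⊤

/-- The uniform probability measure on perfect matchings of the stubs. -/
noncomputable def uniformMatching {n : ℕ} (d : Fin n → ℕ) : Measure (Matching d) :=
  (Nat.card (Matching d) : ℝ≥0∞)⁻¹ • Measure.count

/-- The edge counts `G_{ij}` of the configuration-model multigraph determined by a
matching of the stubs: the number of stubs of `i` matched to stubs of `j`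
(self-loops are automatically counted twice). -/
def cmEdges {n : ℕ} (d : Fin n → ℕ) (σ : Matching d) (i j : Fin n) : ℕ :=
  (Finset.univ.filter (fun s : Fin (d i) => ((σ.1 ⟨i, s⟩).1 = j))).card

/-- Parity correction: add `1` to the last coordinate if the total sum is odd,
making the total even. -/
def parityFix (n : ℕ) (x : Fin n → ℕ) (i : Fin n) : ℕ :=
  if (i : ℕ) = n - 1 ∧ (∑ j, x j) % 2 = 1 then x i + 1 else x i

/-- The law of the degree sequence `IID(𝒟)` of length `n`, where `ν` is the law of `𝒟`:
i.i.d. samples with the last one corrected for parity. -/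
noncomputable def iidLaw (n : ℕ) (ν : Measure ℕ) : Measure (Fin n → ℕ) :=
  Measure.map (parityFix n) (Measure.pi fun _ : Fin n => ν)

/-- The joint law of (degree sequence, edge counts) in the configuration model of size `n`
with degree sequence `IID(𝒟)`, where `ν` is the law of `𝒟`: sample the degrees, then an
independent uniform perfect matching of the stubs. -/
noncomputable def cmLaw (n : ℕ) (ν : Measure ℕ) :
    Measure ((Fin n → ℕ) × (Fin n → Fin n → ℕ)) :=
  (iidLaw n ν).bind fun d => (uniformMatching d).map fun σ => (d, cmEdges d σ)

noncomputable instance instFintypeMatching {n : ℕ} (d : Fin n → ℕ) : Fintype (Matching d) := by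
  unfold Matching
  exact Fintype.ofFinite _

/-- Conjugating a matching by a permutation of the stubs. -/
def conjM {n : ℕ} {d : Fin n → ℕ} (τ : Equiv.Perm (Stubs d)) (σ : Matching d) : Matching d :=
  ⟨(τ.symm.trans σ.1).trans τ, by
    intro s
    constructor
    · intro h
      simp only [Equiv.trans_apply] at h
      have h1 := (σ.2 (τ.symm s)).1
      apply h1
      rw [Equiv.eq_symm_apply]
      exact h
    · simp only [Equiv.trans_apply, Equiv.symm_apply_apply]
      rw [(σ.2 _).2, Equiv.apply_symm_apply]⟩

lemma conjM_apply {n : ℕ} {d : Fin n → ℕ} (τ : Equiv.Perm (Stubs d)) (σ : Matching d)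
    (s : Stubs d) : (conjM τ σ).1 s = τ (σ.1 (τ.symm s)) := rfl

lemma conjM_inj {n : ℕ} {d : Fin n → ℕ} (τ : Equiv.Perm (Stubs d)) :
    Function.Injective (conjM τ : Matching d → Matching d) := by
  intro a b h
  apply Subtype.ext
  apply Equiv.ext
  intro s
  have := congrArg (fun m : Matching d => m.1 (τ s)) h
  simpa [conjM_apply] using this

open Classical in
lemma card_one {n : ℕ} (d : Fin n → ℕ) (s u : Stubs d) (hsu : s ≠ u) :
    (Finset.univ.filter (fun σ : Matching d => σ.1 s = u)).card * (Fintype.card (Stubs d) - 1)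
      ≤ Fintype.card (Matching d) := by
  have key : ∀ v ∈ Finset.univ.erase s,
      (Finset.univ.filter (fun σ : Matching d => σ.1 s = u)).card
        ≤ (Finset.univ.filter (fun σ : Matching d => σ.1 s = v)).card := by
    intro v hv
    have hv' : v ≠ s := by simpa using hv
    refine Finset.card_le_card_of_injOn (conjM (Equiv.swap u v)) ?_ ((conjM_inj _).injOn)
    intro σ hσ
    simp only [Finset.coe_filter, Finset.mem_univ, true_and, Set.mem_ofPred_eq] at hσ ⊢
    rw [conjM_apply, Equiv.symm_swap, Equiv.swap_apply_of_ne_of_ne hsu hv'.symm, hσ,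
      Equiv.swap_apply_left]
  have h2 := Finset.sum_le_sum key
  rw [Finset.sum_const, Finset.card_erase_of_mem (Finset.mem_univ _), Finset.card_univ,
    smul_eq_mul, mul_comm] at h2
  refine h2.trans ?_
  rw [← Finset.card_biUnion]
  · exact Finset.card_le_univ _
  · intro a _ b _ hab
    rw [Function.onFun, Finset.disjoint_left]
    intro σ h1 h2
    simp only [Finset.mem_filter, Finset.mem_univ, true_and] at h1 h2
    exact hab (h1.symm.trans h2)

open Classical in
lemma card_two {n : ℕ} (d : Fin n → ℕ) (s u t v : Stubs d) (hvs : v ≠ s)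
    (hvt : v ≠ t) (hvu : v ≠ u) :
    (Finset.univ.filter (fun σ : Matching d => σ.1 s = u ∧ σ.1 t = v)).card
        * (Fintype.card (Stubs d) - 3)
      ≤ (Finset.univ.filter (fun σ : Matching d => σ.1 s = u)).card := by
  have key : ∀ w ∈ Finset.univ \ {s, t, u},
      (Finset.univ.filter (fun σ : Matching d => σ.1 s = u ∧ σ.1 t = v)).card
        ≤ (Finset.univ.filter (fun σ : Matching d => σ.1 s = u ∧ σ.1 t = w)).card := by
    intro w hw
    simp only [Finset.mem_sdiff, Finset.mem_univ, true_and, Finset.mem_insert,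
      Finset.mem_singleton, not_or] at hw
    obtain ⟨hws, hwt, hwu⟩ := hw
    refine Finset.card_le_card_of_injOn (conjM (Equiv.swap v w)) ?_ ((conjM_inj _).injOn)
    intro σ hσ
    simp only [Finset.coe_filter, Finset.mem_univ, true_and, Set.mem_ofPred_eq] at hσ ⊢
    rw [conjM_apply, conjM_apply, Equiv.symm_swap,
      Equiv.swap_apply_of_ne_of_ne hvs.symm (Ne.symm hws),
      Equiv.swap_apply_of_ne_of_ne hvt.symm (Ne.symm hwt), hσ.1, hσ.2,
      Equiv.swap_apply_left, Equiv.swap_apply_of_ne_of_ne hvu.symm (Ne.symm hwu)]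
    exact ⟨rfl, rfl⟩
  have h2 := Finset.sum_le_sum key
  rw [Finset.sum_const, smul_eq_mul, mul_comm] at h2
  have h3 : Fintype.card (Stubs d) - 3 ≤ (Finset.univ \ {s, t, u} : Finset (Stubs d)).card := by
    have := Finset.le_card_sdiff ({s, t, u} : Finset (Stubs d)) Finset.univ
    have h4 : ({s, t, u} : Finset (Stubs d)).card ≤ 3 := Finset.card_le_three
    rw [Finset.card_univ] at this
    omega
  refine (Nat.mul_le_mul_left _ h3).trans (h2.trans ?_)
  rw [← Finset.card_biUnion]
  · apply Finset.card_le_card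
    intro σ hσ
    simp only [Finset.mem_biUnion, Finset.mem_filter, Finset.mem_univ, true_and] at hσ ⊢
    obtain ⟨_, _, h, _⟩ := hσ
    exact h
  · intro a _ b _ hab
    rw [Function.onFun, Finset.disjoint_left]
    intro σ h1 h2
    simp only [Finset.mem_filter, Finset.mem_univ, true_and] at h1 h2
    exact hab (h1.2.symm.trans h2.2)

lemma card_stubs {n : ℕ} (d : Fin n → ℕ) : Fintype.card (Stubs d) = degSum d := by
  simp [degSum]

open Classical in
lemma card_one_real {n : ℕ} (d : Fin n → ℕ) (hL : 6 ≤ degSum d) (s u : Stubs d) (hsu : s ≠ u) :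
    ((Finset.univ.filter (fun σ : Matching d => σ.1 s = u)).card : ℝ)
      ≤ 2 / (degSum d : ℝ) * Fintype.card (Matching d) := by
  have h := card_one d s u hsu
  rw [card_stubs] at h
  have h' : (((Finset.univ.filter (fun σ : Matching d => σ.1 s = u)).card : ℕ) : ℝ)
      * ((degSum d : ℝ) - 1) ≤ Fintype.card (Matching d) := by
    have : (((degSum d - 1 : ℕ)) : ℝ) = (degSum d : ℝ) - 1 := by
      rw [Nat.cast_sub (by omega)]; simp
    rw [← this]
    exact_mod_cast h
  have hL' : (6 : ℝ) ≤ degSum d := by exact_mod_cast hL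
  rw [div_mul_eq_mul_div, le_div_iff₀ (by linarith)]
  have hc : (0 : ℝ) ≤ ((Finset.univ.filter (fun σ : Matching d => σ.1 s = u)).card : ℝ) :=
    Nat.cast_nonneg _
  nlinarith

open Classical in
lemma card_two_real {n : ℕ} (d : Fin n → ℕ) (hL : 6 ≤ degSum d) (s u t v : Stubs d)
    (hsu : s ≠ u) (hvs : v ≠ s) (hvt : v ≠ t) (hvu : v ≠ u) :
    ((Finset.univ.filter (fun σ : Matching d => σ.1 s = u ∧ σ.1 t = v)).card : ℝ)
      ≤ 4 / (degSum d : ℝ) ^ 2 * Fintype.card (Matching d) := by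
  have h1 := card_one_real d hL s u hsu
  have h := card_two d s u t v hvs hvt hvu
  rw [card_stubs] at h
  have h' : (((Finset.univ.filter (fun σ : Matching d => σ.1 s = u ∧ σ.1 t = v)).card : ℕ) : ℝ)
      * ((degSum d : ℝ) - 3) ≤
      ((Finset.univ.filter (fun σ : Matching d => σ.1 s = u)).card : ℝ) := by
    have : (((degSum d - 3 : ℕ)) : ℝ) = (degSum d : ℝ) - 3 := by
      rw [Nat.cast_sub (by omega)]; simp
    rw [← this]
    exact_mod_cast h
  have hL' : (6 : ℝ) ≤ degSum d := by exact_mod_cast hL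
  rw [div_mul_eq_mul_div, le_div_iff₀ (by linarith)] at h1
  rw [div_mul_eq_mul_div, le_div_iff₀ (by positivity)]
  have hc : (0 : ℝ) ≤
      ((Finset.univ.filter (fun σ : Matching d => σ.1 s = u ∧ σ.1 t = v)).card : ℝ) :=
    Nat.cast_nonneg _
  have h5 : ((Finset.univ.filter (fun σ : Matching d => σ.1 s = u ∧ σ.1 t = v)).card : ℝ)
      * (degSum d : ℝ) ≤
      2 * ((Finset.univ.filter (fun σ : Matching d => σ.1 s = u)).card : ℝ) := by nlinarith
  nlinarith

lemma cmEdges_sum {n : ℕ} (d : Fin n → ℕ) (σ : Matching d) (i : Fin n) :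
    ∑ j, cmEdges d σ i j = d i := by
  unfold cmEdges
  rw [← Finset.card_eq_sum_card_fiberwise (f := fun s : Fin (d i) => (σ.1 ⟨i, s⟩).1)
    (s := Finset.univ) (t := Finset.univ)]
  · simp
  · intro x _; simp

lemma cmEdges_symm {n : ℕ} (d : Fin n → ℕ) (σ : Matching d) (i j : Fin n) :
    cmEdges d σ i j = cmEdges d σ j i := by
  have key : ∀ i j, cmEdges d σ i j =
      ((Finset.univ : Finset (Stubs d)).filter (fun s => s.1 = i ∧ (σ.1 s).1 = j)).card := by
    intro i j
    unfold cmEdges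
    refine Finset.card_bij (fun s _ => ⟨i, s⟩) ?_ ?_ ?_
    · intro a ha
      simpa using ha
    · intro a _ b _ h
      simpa using h
    · rintro ⟨i', b⟩ hb
      simp only [Finset.mem_filter, Finset.mem_univ, true_and] at hb
      obtain ⟨rfl, hb⟩ := hb
      exact ⟨b, by simpa using hb, rfl⟩
  rw [key, key]
  refine Finset.card_bij (fun s _ => σ.1 s) ?_ ?_ ?_
  · intro a ha
    simp only [Finset.mem_filter, Finset.mem_univ, true_and] at ha ⊢
    rw [(σ.2 a).2]
    exact ⟨ha.2, ha.1⟩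
  · intro a _ b _ h
    exact σ.1.injective h
  · intro b hb
    simp only [Finset.mem_filter, Finset.mem_univ, true_and] at hb
    refine ⟨σ.1 b, ?_, (σ.2 b).2⟩
    simp only [Finset.mem_filter, Finset.mem_univ, true_and]
    rw [(σ.2 b).2]
    exact ⟨hb.2, hb.1⟩

lemma bad_imp {n : ℕ} (d : Fin n → ℕ) (σ : Matching d) (i : Fin n)
    (h : eraseDeg (cmEdges d σ) i ≠ d i) :
    (∃ a b : Fin (d i), a ≠ b ∧ σ.1 ⟨i, a⟩ = ⟨i, b⟩) ∨
    (∃ a b : Fin (d i), a ≠ b ∧ ∃ j, j ≠ i ∧ ∃ u v : Fin (d j), u ≠ v ∧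
      σ.1 ⟨i, a⟩ = ⟨j, u⟩ ∧ σ.1 ⟨i, b⟩ = ⟨j, v⟩) := by
  by_contra hcon
  rw [not_or] at hcon
  obtain ⟨h1, h2⟩ := hcon
  apply h
  rw [← cmEdges_sum d σ i]
  unfold eraseDeg
  apply Finset.sum_congr rfl
  intro j _
  unfold erase
  split_ifs with hij
  · subst hij
    symm
    unfold cmEdges
    rw [Finset.card_eq_zero, Finset.filter_eq_empty_iff]
    intro a _ ha
    apply h1
    rcases hb : σ.1 ⟨i, a⟩ with ⟨i', b⟩
    rw [hb] at ha
    simp only at ha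
    subst ha
    refine ⟨a, b, ?_, hb⟩
    rintro rfl
    exact (σ.2 _).1 hb
  · rw [min_eq_left]
    unfold cmEdges
    rw [Finset.card_le_one]
    intro a ha b hb
    by_contra hab
    apply h2
    simp only [Finset.mem_filter, Finset.mem_univ, true_and] at ha hb
    rcases hu : σ.1 ⟨i, a⟩ with ⟨j1, u⟩
    rcases hv : σ.1 ⟨i, b⟩ with ⟨j2, v⟩
    rw [hu] at ha
    rw [hv] at hb
    simp only at ha hb
    subst ha
    subst hb
    refine ⟨a, b, hab, _, Ne.symm hij, u, v, ?_, hu, hv⟩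
    rintro rfl
    have := σ.1.injective (hu.trans hv.symm)
    simp at this
    exact hab this

open Classical in
lemma card_bad {n : ℕ} (d : Fin n → ℕ) (hL : 6 ≤ degSum d) (i : Fin n) :
    ((Finset.univ.filter (fun σ : Matching d => eraseDeg (cmEdges d σ) i ≠ d i)).card : ℝ)
      ≤ (d i : ℝ) ^ 2 * (2 / (degSum d : ℝ) + 4 * (∑ j, (d j : ℝ) ^ 2) / (degSum d : ℝ) ^ 2)
        * Fintype.card (Matching d) := by
  set P : Finset (Fin (d i) × Fin (d i)) := Finset.univ.filter (fun p => p.1 ≠ p.2)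
  set Q : Finset ((j : Fin n) × (Fin (d j) × Fin (d j))) :=
    Finset.univ.filter (fun p => p.1 ≠ i ∧ p.2.1 ≠ p.2.2)
  set A : Fin (d i) × Fin (d i) → Finset (Matching d) := fun p =>
    Finset.univ.filter (fun σ : Matching d => σ.1 ⟨i, p.1⟩ = ⟨i, p.2⟩)
  set C : (Fin (d i) × Fin (d i)) × ((j : Fin n) × (Fin (d j) × Fin (d j))) →
      Finset (Matching d) := fun p =>
    Finset.univ.filter (fun σ : Matching d => σ.1 ⟨i, p.1.1⟩ = ⟨p.2.1, p.2.2.1⟩ ∧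
      σ.1 ⟨i, p.1.2⟩ = ⟨p.2.1, p.2.2.2⟩)
  have hsub : (Finset.univ.filter (fun σ : Matching d => eraseDeg (cmEdges d σ) i ≠ d i)) ⊆
      P.biUnion A ∪ (P ×ˢ Q).biUnion C := by
    intro σ hσ
    simp only [Finset.mem_filter, Finset.mem_univ, true_and] at hσ
    rw [Finset.mem_union, Finset.mem_biUnion, Finset.mem_biUnion]
    rcases bad_imp d σ i hσ with ⟨a, b, hab, h⟩ | ⟨a, b, hab, j, hj, u, v, huv, h⟩
    · left
      exact ⟨(a, b), by simp [P, hab], by simp [A, h]⟩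
    · right
      exact ⟨((a, b), ⟨j, (u, v)⟩), by simp [P, Q, hab, hj, huv], by simp [C, h]⟩
  have hcardP : (P.card : ℝ) ≤ (d i : ℝ) ^ 2 := by
    have : P.card ≤ d i * d i := by
      refine (Finset.card_le_univ _).trans ?_
      simp
    rw [sq]
    exact_mod_cast this
  have hcardQ : (Q.card : ℝ) ≤ ∑ j, (d j : ℝ) ^ 2 := by
    have : Q.card ≤ ∑ j, d j * d j := by
      refine (Finset.card_le_univ _).trans ?_
      simp
    simp only [sq]
    exact_mod_cast this
  have h1 : ((P.biUnion A).card : ℝ) ≤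
      (d i : ℝ) ^ 2 * (2 / (degSum d : ℝ) * Fintype.card (Matching d)) := by
    have e1 : ((P.biUnion A).card : ℝ) ≤ ∑ p ∈ P, ((A p).card : ℝ) := by
      exact_mod_cast Finset.card_biUnion_le
    have e2 : ∑ p ∈ P, ((A p).card : ℝ) ≤
        ∑ p ∈ P, (2 / (degSum d : ℝ) * Fintype.card (Matching d)) := by
      apply Finset.sum_le_sum
      intro p hp
      apply card_one_real d hL
      simpa [P] using hp
    rw [Finset.sum_const, nsmul_eq_mul] at e2
    refine e1.trans (e2.trans ?_)
    gcongr
  have h2 : (((P ×ˢ Q).biUnion C).card : ℝ) ≤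
      (d i : ℝ) ^ 2 * (∑ j, (d j : ℝ) ^ 2) *
        (4 / (degSum d : ℝ) ^ 2 * Fintype.card (Matching d)) := by
    have e1 : (((P ×ˢ Q).biUnion C).card : ℝ) ≤ ∑ p ∈ P ×ˢ Q, ((C p).card : ℝ) := by
      exact_mod_cast Finset.card_biUnion_le
    have e2 : ∑ p ∈ P ×ˢ Q, ((C p).card : ℝ) ≤
        ∑ p ∈ P ×ˢ Q, (4 / (degSum d : ℝ) ^ 2 * Fintype.card (Matching d)) := by
      apply Finset.sum_le_sum
      intro p hp
      have hp' : p.1.1 ≠ p.1.2 ∧ p.2.1 ≠ i ∧ p.2.2.1 ≠ p.2.2.2 := by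
        simpa [P, Q] using hp
      apply card_two_real d hL
      · intro h
        exact hp'.2.1 (congrArg Sigma.fst h).symm
      · intro h
        exact hp'.2.1 (congrArg Sigma.fst h)
      · intro h
        exact hp'.2.1 (congrArg Sigma.fst h)
      · intro h
        simp at h
        exact hp'.2.2 h.symm
    rw [Finset.sum_const, nsmul_eq_mul, Finset.card_product, Nat.cast_mul] at e2
    refine e1.trans (e2.trans ?_)
    gcongr
  have h3 : ((Finset.univ.filter
      (fun σ : Matching d => eraseDeg (cmEdges d σ) i ≠ d i)).card : ℝ) ≤
      (P.biUnion A).card + ((P ×ˢ Q).biUnion C).card := by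
    exact_mod_cast (Finset.card_le_card hsub).trans (Finset.card_union_le _ _)
  refine h3.trans ((add_le_add h1 h2).trans (le_of_eq ?_))
  ring

/-- Total degree of the nodes whose degree is changed by the erasure. -/
noncomputable def badSum {n : ℕ} (d : Fin n → ℕ) (g : Fin n → Fin n → ℕ) : ℝ :=
  ∑ i, if eraseDeg g i ≠ d i then (d i : ℝ) else 0

/-- Total degree of the nodes of degree greater than `M`. -/
noncomputable def tailSum {n : ℕ} (d : Fin n → ℕ) (M : ℕ) : ℝ :=
  ∑ i, if M < d i then (d i : ℝ) else 0

lemma tailSum_nonneg {n : ℕ} (d : Fin n → ℕ) (M : ℕ) : 0 ≤ tailSum d M := by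
  unfold tailSum
  apply Finset.sum_nonneg
  intro i _
  split_ifs <;> simp

lemma degSum_cast {n : ℕ} (d : Fin n → ℕ) : (degSum d : ℝ) = ∑ i, (d i : ℝ) := by
  simp [degSum]

lemma sum_sq_le {n : ℕ} (d : Fin n → ℕ) (M : ℕ) :
    ∑ j, (d j : ℝ) ^ 2 ≤ (M + tailSum d M) * degSum d := by
  have h : ∀ j ∈ Finset.univ, (d j : ℝ) ^ 2 ≤
      (M : ℝ) * d j + (if M < d j then (d j : ℝ) else 0) * degSum d := by
    intro j _
    have hd : (d j : ℝ) ≤ degSum d := by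
      rw [degSum_cast]
      exact Finset.single_le_sum (f := fun i => (d i : ℝ)) (fun i _ => Nat.cast_nonneg _)
        (Finset.mem_univ j)
    have h0 : (0 : ℝ) ≤ d j := Nat.cast_nonneg _
    have hM : (0 : ℝ) ≤ M := Nat.cast_nonneg _
    split_ifs with hj
    · nlinarith
    · have : (d j : ℝ) ≤ M := by exact_mod_cast not_lt.mp hj
      nlinarith
  refine (Finset.sum_le_sum h).trans (le_of_eq ?_)
  rw [Finset.sum_add_distrib, ← Finset.mul_sum, ← Finset.sum_mul, ← degSum_cast]
  unfold tailSum
  ring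

open Classical in
lemma sum_badSum_le {n : ℕ} (d : Fin n → ℕ) (hL : 6 ≤ degSum d) (M M' : ℕ) :
    ∑ σ : Matching d, badSum d (cmEdges d σ) ≤
      (tailSum d M + (2 * (M : ℝ) ^ 2 + 4 * (M : ℝ) ^ 2 * M' + 4 * (M : ℝ) ^ 2 * tailSum d M'))
        * Fintype.card (Matching d) := by
  unfold badSum
  rw [Finset.sum_comm]
  set q : ℝ := 2 / (degSum d : ℝ) + 4 * (∑ j, (d j : ℝ) ^ 2) / (degSum d : ℝ) ^ 2 with hq
  set K : ℝ := ((Fintype.card (Matching d) : ℕ) : ℝ) with hK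
  have hK0 : 0 ≤ K := Nat.cast_nonneg _
  have hL' : (6 : ℝ) ≤ degSum d := by exact_mod_cast hL
  have hS0 : 0 ≤ ∑ j, (d j : ℝ) ^ 2 := Finset.sum_nonneg fun _ _ => sq_nonneg _
  have hq0 : 0 ≤ q := by positivity
  have h : ∀ i ∈ Finset.univ,
      (∑ σ : Matching d, if eraseDeg (cmEdges d σ) i ≠ d i then (d i : ℝ) else 0) ≤
        ((if M < d i then (d i : ℝ) else 0) + d i * ((M : ℝ) ^ 2 * q)) * K := by
    intro i _
    rw [← Finset.sum_filter, Finset.sum_const, nsmul_eq_mul]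
    have h0 : (0 : ℝ) ≤ d i := Nat.cast_nonneg _
    split_ifs with hi
    · have h1 : ((Finset.univ.filter
          (fun σ : Matching d => eraseDeg (cmEdges d σ) i ≠ d i)).card : ℝ) ≤ K := by
        rw [hK]
        exact_mod_cast Finset.card_le_univ _
      have h2 : 0 ≤ (d i : ℝ) * ((M : ℝ) ^ 2 * q) * K := by positivity
      nlinarith
    · have h1 := card_bad d hL i
      rw [← hq, ← hK] at h1
      have hM : (d i : ℝ) ≤ M := by exact_mod_cast not_lt.mp hi
      have h2 : (d i : ℝ) ^ 2 * q * K ≤ (M : ℝ) ^ 2 * q * K := by gcongr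
      calc _ ≤ ((M : ℝ) ^ 2 * q * K) * d i :=
            mul_le_mul_of_nonneg_right (h1.trans h2) h0
        _ = _ := by ring
  refine (Finset.sum_le_sum h).trans ?_
  rw [← Finset.sum_mul, Finset.sum_add_distrib, ← Finset.sum_mul, ← degSum_cast]
  apply mul_le_mul_of_nonneg_right _ hK0
  change tailSum d M + _ ≤ _
  gcongr
  have hS := sum_sq_le d M'
  have h5 : (degSum d : ℝ) * q ≤ 2 + 4 * (M' + tailSum d M') := by
    have : (degSum d : ℝ) * q = 2 + 4 * ((∑ j, (d j : ℝ) ^ 2) / degSum d) := by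
      rw [hq]; field_simp
    rw [this]
    have : (∑ j, (d j : ℝ) ^ 2) / degSum d ≤ M' + tailSum d M' := by
      rw [div_le_iff₀ (by linarith)]
      exact hS
    linarith
  nlinarith [sq_nonneg (M : ℝ)]

/-- Number of nodes of degree `k`. -/
noncomputable def cnt {n : ℕ} (d : Fin n → ℕ) (k : ℕ) : ℝ := ∑ i, if d i = k then (1 : ℝ) else 0

/-- Numerator of the average nearest neighbor rank. -/
noncomputable def numA {n : ℕ} (d : Fin n → ℕ) (g : Fin n → Fin n → ℕ) (k : ℕ) : ℝ :=
  ∑ i, ∑ j, (if d i = k then (g i j : ℝ) else 0) * empSBcdf d (d j)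

lemma cnt_nonneg {n : ℕ} (d : Fin n → ℕ) (k : ℕ) : 0 ≤ cnt d k := by
  unfold cnt
  apply Finset.sum_nonneg
  intro i _
  split_ifs <;> simp

lemma k_cnt_le {n : ℕ} (d : Fin n → ℕ) (k : ℕ) : k * cnt d k ≤ degSum d := by
  unfold cnt
  rw [degSum_cast, Finset.mul_sum]
  apply Finset.sum_le_sum
  intro i _
  split_ifs with h
  · simp [h]
  · simp

lemma tsum_joint {n : ℕ} (d : Fin n → ℕ) (g : Fin n → Fin n → ℕ) (k : ℕ) :
    ∑' l : ℕ, jointDens d g k l * empSBcdf d l = numA d g k / degSum d := by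
  have hsupp : ∀ l ∉ Finset.univ.image d, jointDens d g k l * empSBcdf d l = 0 := by
    intro l hl
    have : jointDens d g k l = 0 := by
      unfold jointDens
      rw [Finset.sum_eq_zero, zero_div]
      intro i _
      apply Finset.sum_eq_zero
      intro j _
      rw [if_neg]
      rintro ⟨_, rfl⟩
      exact hl (Finset.mem_image_of_mem _ (Finset.mem_univ _))
    rw [this, zero_mul]
  rw [tsum_eq_sum hsupp]
  unfold jointDens numA
  simp_rw [div_mul_eq_mul_div]
  rw [← Finset.sum_div]
  congr 1
  simp_rw [Finset.sum_mul]
  rw [Finset.sum_comm]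
  apply Finset.sum_congr rfl
  intro i _
  rw [Finset.sum_comm]
  apply Finset.sum_congr rfl
  intro j _
  rw [Finset.sum_eq_single (d j)]
  · simp
  · intro b _ hb
    rw [if_neg, zero_mul]
    rintro ⟨_, h⟩
    exact hb h.symm
  · intro h
    exact absurd (Finset.mem_image_of_mem _ (Finset.mem_univ _)) h

lemma ANNR_eq {n : ℕ} (d : Fin n → ℕ) (g : Fin n → Fin n → ℕ) (k : ℕ) (hk : 1 ≤ k) :
    ANNR d g k = numA d g k / (k * cnt d k) := by
  unfold ANNR
  rw [tsum_joint]
  have hk' : (0 : ℝ) < k := by exact_mod_cast hk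
  have hSB : empSB d k = k * cnt d k / degSum d := by
    unfold empSB cnt
    rw [Finset.mul_sum]
    congr 1
    apply Finset.sum_congr rfl
    intro i _
    split_ifs <;> simp
  have hE : empDens d k = cnt d k / n := rfl
  rw [hSB, hE]
  rcases (cnt_nonneg d k).eq_or_lt with h | h
  · rw [← h]; simp
  · have hn : 0 < n := by
      rcases Nat.eq_zero_or_pos n with rfl | hn
      · simp [cnt] at h
      · exact hn
    have hn' : (0 : ℝ) < n := by exact_mod_cast hn
    rw [if_pos (by positivity)]
    have hL : (0 : ℝ) < degSum d := lt_of_lt_of_le (by positivity) (k_cnt_le d k)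
    field_simp

lemma cdf_nonneg {n : ℕ} (d : Fin n → ℕ) (l : ℕ) : 0 ≤ empSBcdf d l := by
  unfold empSBcdf
  apply div_nonneg _ (Nat.cast_nonneg _)
  apply Finset.sum_nonneg
  intro i _
  split_ifs <;> simp

lemma cdf_num_le {n : ℕ} (d : Fin n → ℕ) (l : ℕ) :
    (∑ i, if d i ≤ l then (d i : ℝ) else 0) ≤ degSum d := by
  rw [degSum_cast]
  apply Finset.sum_le_sum
  intro i _
  split_ifs <;> simp

lemma cdf_le_one {n : ℕ} (d : Fin n → ℕ) (l : ℕ) : empSBcdf d l ≤ 1 := by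
  unfold empSBcdf
  exact div_le_one_of_le₀ (cdf_num_le d l) (Nat.cast_nonneg _)

lemma erase_le {n : ℕ} (g : Fin n → Fin n → ℕ) (i j : Fin n) : erase g i j ≤ g i j := by
  unfold erase
  split_ifs
  · simp
  · exact min_le_left _ _

section det
variable {n : ℕ} (d : Fin n → ℕ) (g : Fin n → Fin n → ℕ)

lemma eraseDeg_le (hdeg : ∀ i, ∑ j, g i j = d i) (i : Fin n) : eraseDeg g i ≤ d i := by
  rw [← hdeg i]
  exact Finset.sum_le_sum fun j _ => erase_le g i j

lemma erase_eq_of_good (hdeg : ∀ i, ∑ j, g i j = d i) (i : Fin n) (hi : eraseDeg g i = d i)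
    (j : Fin n) : erase g i j = g i j := by
  rw [← hdeg i] at hi
  exact (Finset.sum_eq_sum_iff_of_le (fun j _ => erase_le g i j)).1 hi j (Finset.mem_univ _)

lemma badSum_nonneg : 0 ≤ badSum d g := by
  unfold badSum
  apply Finset.sum_nonneg
  intro i _
  split_ifs <;> simp

lemma cnt_diff (hdeg : ∀ i, ∑ j, g i j = d i) (k : ℕ) :
    |cnt d k - cnt (eraseDeg g) k| ≤ badSum d g := by
  unfold cnt badSum
  rw [← Finset.sum_sub_distrib]
  refine (Finset.abs_sum_le_sum_abs _ _).trans (Finset.sum_le_sum ?_)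
  intro i _
  by_cases h : eraseDeg g i = d i
  · simp [h]
  · have h1 := eraseDeg_le d g hdeg i
    have h2 : 1 ≤ d i := by omega
    have h3 : (1 : ℝ) ≤ d i := by exact_mod_cast h2
    rw [if_pos (show eraseDeg g i ≠ d i from h), abs_le]
    split_ifs <;> constructor <;> linarith

lemma degSum_erase (hdeg : ∀ i, ∑ j, g i j = d i) :
    |(degSum d : ℝ) - degSum (eraseDeg g)| ≤ badSum d g := by
  rw [degSum_cast, degSum_cast, ← Finset.sum_sub_distrib]
  unfold badSum
  refine (Finset.abs_sum_le_sum_abs _ _).trans (Finset.sum_le_sum ?_)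
  intro i _
  have h1 : (eraseDeg g i : ℝ) ≤ d i := by exact_mod_cast eraseDeg_le d g hdeg i
  by_cases h : eraseDeg g i = d i
  · simp [h]
  · rw [if_pos (by exact h), abs_le]
    have : (0 : ℝ) ≤ eraseDeg g i := Nat.cast_nonneg _
    constructor <;> linarith

lemma cdf_num_diff (hdeg : ∀ i, ∑ j, g i j = d i) (l : ℕ) :
    |(∑ i, if d i ≤ l then (d i : ℝ) else 0) -
      ∑ i, if eraseDeg g i ≤ l then (eraseDeg g i : ℝ) else 0| ≤ badSum d g := by
  rw [← Finset.sum_sub_distrib]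
  unfold badSum
  refine (Finset.abs_sum_le_sum_abs _ _).trans (Finset.sum_le_sum ?_)
  intro i _
  have h1 : (eraseDeg g i : ℝ) ≤ d i := by exact_mod_cast eraseDeg_le d g hdeg i
  by_cases h : eraseDeg g i = d i
  · simp [h]
  · rw [if_pos (show eraseDeg g i ≠ d i from h), abs_le]
    have : (0 : ℝ) ≤ eraseDeg g i := Nat.cast_nonneg _
    split_ifs <;> constructor <;> linarith

lemma cdf_diff (hdeg : ∀ i, ∑ j, g i j = d i) (hL : 0 < degSum d) (l : ℕ) :
    |empSBcdf d l - empSBcdf (eraseDeg g) l| ≤ 2 * badSum d g / degSum d := by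
  have h1 := cdf_num_diff d g hdeg l
  have h2 := degSum_erase d g hdeg
  have h3 := cdf_num_le (eraseDeg g) l
  have h4 : 0 ≤ ∑ i, if eraseDeg g i ≤ l then (eraseDeg g i : ℝ) else 0 := by
    apply Finset.sum_nonneg
    intro i _
    split_ifs <;> simp
  unfold empSBcdf
  set a := ∑ i, if d i ≤ l then (d i : ℝ) else 0
  set b := ∑ i, if eraseDeg g i ≤ l then (eraseDeg g i : ℝ) else 0
  set B := badSum d g
  have hL' : (0 : ℝ) < degSum d := by exact_mod_cast hL
  set L : ℝ := (degSum d : ℝ)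
  set L' : ℝ := (degSum (eraseDeg g) : ℝ)
  have hr0 : 0 ≤ b / L' := div_nonneg h4 (h4.trans h3)
  have hr1 : b / L' ≤ 1 := div_le_one_of_le₀ h3 (h4.trans h3)
  have hb : b = b / L' * L' := by
    rcases eq_or_ne L' 0 with h | h
    · rw [h] at h3 ⊢
      have : b = 0 := le_antisymm h3 h4
      rw [this]; simp
    · field_simp
  have e : a / L - b / L' = ((a - b) + b / L' * (L' - L)) / L := by
    have e1 : (a - b) + b / L' * (L' - L) = a - b / L' * L := by
      linear_combination -hb
    rw [e1]
    generalize b / L' = r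
    field_simp
  rw [e, abs_div, abs_of_pos hL']
  gcongr
  refine (abs_add_le _ _).trans ?_
  rw [abs_mul, abs_of_nonneg hr0, abs_sub_comm L' L]
  have := mul_le_mul hr1 h2 (abs_nonneg _) zero_le_one
  linarith

lemma erase_symm (hsym : ∀ i j, g i j = g j i) (i j : Fin n) : erase g i j = erase g j i := by
  unfold erase
  rw [hsym i j]
  simp only [eq_comm]

lemma numA_diff (hdeg : ∀ i, ∑ j, g i j = d i) (hsym : ∀ i j, g i j = g j i)
    (hL : 0 < degSum d) (k : ℕ) :
    |numA d g k - numA (eraseDeg g) (erase g) k| ≤ 5 * badSum d g := by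
  set B := badSum d g with hB
  have hB0 : 0 ≤ B := badSum_nonneg d g
  have hdegR : ∀ i, ∑ j, (g i j : ℝ) = d i := by
    intro i; exact_mod_cast hdeg i
  have hdegR' : ∀ i, ∑ j, (erase g i j : ℝ) = eraseDeg g i := by
    intro i; unfold eraseDeg; push_cast; rfl
  have hle : ∀ i, (eraseDeg g i : ℝ) ≤ d i := by
    intro i; exact_mod_cast eraseDeg_le d g hdeg i
  have hL' : (0 : ℝ) < degSum d := by exact_mod_cast hL
  have t1 : ∀ i j, (if d i = k then (g i j : ℝ) else 0) * empSBcdf d (d j) -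
      (if eraseDeg g i = k then (erase g i j : ℝ) else 0) *
        empSBcdf (eraseDeg g) (eraseDeg g j) =
      ((if d i = k then (g i j : ℝ) else 0) - (if eraseDeg g i = k then (erase g i j : ℝ) else 0))
        * empSBcdf d (d j) +
      (if eraseDeg g i = k then (erase g i j : ℝ) else 0) *
        (empSBcdf d (d j) - empSBcdf (eraseDeg g) (eraseDeg g j)) := by
    intro i j; ring
  have t2 : ∀ i j, |((if d i = k then (g i j : ℝ) else 0) -
        (if eraseDeg g i = k then (erase g i j : ℝ) else 0)) * empSBcdf d (d j)| ≤
      if eraseDeg g i ≠ d i then ((g i j : ℝ) + erase g i j) else 0 := by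
    intro i j
    have hg : (0 : ℝ) ≤ g i j := Nat.cast_nonneg _
    have he : (0 : ℝ) ≤ erase g i j := Nat.cast_nonneg _
    by_cases h : eraseDeg g i = d i
    · simp [h, erase_eq_of_good d g hdeg i h j]
    · rw [if_pos (show eraseDeg g i ≠ d i from h), abs_mul, abs_of_nonneg (cdf_nonneg _ _)]
      refine (mul_le_of_le_one_right (abs_nonneg _) (cdf_le_one _ _)).trans ?_
      rw [abs_le]
      split_ifs <;> constructor <;> linarith
  have t3 : ∀ i j, |(if eraseDeg g i = k then (erase g i j : ℝ) else 0) *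
        (empSBcdf d (d j) - empSBcdf (eraseDeg g) (eraseDeg g j))| ≤
      (if eraseDeg g i = k then (erase g i j : ℝ) else 0) * (2 * B / degSum d) +
        (if eraseDeg g j ≠ d j then (erase g i j : ℝ) else 0) := by
    intro i j
    have he : (0 : ℝ) ≤ erase g i j := Nat.cast_nonneg _
    have hx : (0 : ℝ) ≤ if eraseDeg g i = k then (erase g i j : ℝ) else 0 := by
      split_ifs <;> simp
    have hx' : (if eraseDeg g i = k then (erase g i j : ℝ) else 0) ≤ erase g i j := by
      split_ifs <;> simp
    rw [abs_mul, abs_of_nonneg hx]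
    by_cases h : eraseDeg g j = d j
    · have := cdf_diff d g hdeg hL (d j)
      rw [h]
      simp only [ne_eq, not_true_eq_false, if_false, add_zero]
      exact mul_le_mul_of_nonneg_left this hx
    · rw [if_pos (show eraseDeg g j ≠ d j from h)]
      have h1 : |empSBcdf d (d j) - empSBcdf (eraseDeg g) (eraseDeg g j)| ≤ 1 := by
        rw [abs_le]
        have a1 := cdf_nonneg d (d j)
        have a2 := cdf_le_one d (d j)
        have a3 := cdf_nonneg (eraseDeg g) (eraseDeg g j)
        have a4 := cdf_le_one (eraseDeg g) (eraseDeg g j)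
        constructor <;> linarith
      have h2 : 0 ≤ (if eraseDeg g i = k then (erase g i j : ℝ) else 0) * (2 * B / degSum d) :=
        mul_nonneg hx (by positivity)
      have h3 := mul_le_of_le_one_right hx h1
      linarith
  have s2 : ∑ i, ∑ j, (if eraseDeg g i ≠ d i then ((g i j : ℝ) + erase g i j) else 0) ≤ 2 * B := by
    rw [hB]
    unfold badSum
    rw [Finset.mul_sum]
    apply Finset.sum_le_sum
    intro i _
    split_ifs with h
    · rw [Finset.sum_add_distrib, hdegR, hdegR']
      linarith [hle i]
    · simp
  have s3 : ∑ i, ∑ j, (if eraseDeg g i = k then (erase g i j : ℝ) else 0) * (2 * B / degSum d)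
      ≤ 2 * B := by
    simp_rw [← Finset.sum_mul]
    have : ∑ i, ∑ j, (if eraseDeg g i = k then (erase g i j : ℝ) else 0) ≤ degSum d := by
      rw [degSum_cast]
      apply Finset.sum_le_sum
      intro i _
      split_ifs
      · rw [hdegR']; exact hle i
      · simp
    calc _ ≤ (degSum d : ℝ) * (2 * B / degSum d) := by gcongr
      _ = 2 * B := by field_simp
  have s4 : ∑ i, ∑ j, (if eraseDeg g j ≠ d j then (erase g i j : ℝ) else 0) ≤ B := by
    rw [Finset.sum_comm, hB]
    unfold badSum
    apply Finset.sum_le_sum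
    intro j _
    split_ifs with h
    · simp_rw [fun i => erase_symm g hsym i j]
      rw [hdegR']
      exact hle j
    · simp
  unfold numA
  rw [← Finset.sum_sub_distrib]
  calc _ ≤ ∑ i, ∑ j, ((if eraseDeg g i ≠ d i then ((g i j : ℝ) + erase g i j) else 0) +
        ((if eraseDeg g i = k then (erase g i j : ℝ) else 0) * (2 * B / degSum d) +
        (if eraseDeg g j ≠ d j then (erase g i j : ℝ) else 0))) := by
        refine (Finset.abs_sum_le_sum_abs _ _).trans (Finset.sum_le_sum fun i _ => ?_)
        rw [← Finset.sum_sub_distrib]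
        refine (Finset.abs_sum_le_sum_abs _ _).trans (Finset.sum_le_sum fun j _ => ?_)
        rw [t1]
        exact (abs_add_le _ _).trans (add_le_add (t2 i j) (t3 i j))
    _ ≤ 5 * B := by
        simp_rw [Finset.sum_add_distrib] at s2 ⊢
        linarith

lemma numA_nonneg (k : ℕ) : 0 ≤ numA d g k := by
  unfold numA
  refine Finset.sum_nonneg fun i _ => Finset.sum_nonneg fun j _ => mul_nonneg ?_ (cdf_nonneg _ _)
  split_ifs <;> simp

lemma numA_le (hdeg : ∀ i, ∑ j, g i j = d i) (k : ℕ) : numA d g k ≤ k * cnt d k := by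
  unfold numA cnt
  rw [Finset.mul_sum]
  refine Finset.sum_le_sum fun i _ => ?_
  split_ifs with h
  · rw [mul_one, ← h, ← hdeg i]
    push_cast
    exact Finset.sum_le_sum fun j _ =>
      mul_le_of_le_one_right (Nat.cast_nonneg _) (cdf_le_one _ _)
  · simp

lemma ANNR_diff (hdeg : ∀ i, ∑ j, g i j = d i) (hsym : ∀ i j, g i j = g j i)
    (k : ℕ) (hk : 1 ≤ k) (hN : 0 < cnt d k) :
    |ANNR (eraseDeg g) (erase g) k - ANNR d g k| ≤ 6 * badSum d g / cnt d k := by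
  have hk' : (1 : ℝ) ≤ k := by exact_mod_cast hk
  have hL : 0 < degSum d := by
    have := k_cnt_le d k
    have h2 : (0 : ℝ) < degSum d := lt_of_lt_of_le (by positivity) this
    exact_mod_cast h2
  rw [ANNR_eq _ _ k hk, ANNR_eq _ _ k hk, abs_sub_comm]
  have h1 := numA_diff d g hdeg hsym hL k
  have h2 := cnt_diff d g hdeg k
  have h3 := numA_nonneg (eraseDeg g) (erase g) k
  have h4 := numA_le (eraseDeg g) (erase g) (fun i => rfl) k
  have hB0 := badSum_nonneg d g
  set a := numA d g k
  set b := numA (eraseDeg g) (erase g) k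
  set B := badSum d g
  set N := cnt d k
  set N' := cnt (eraseDeg g) k
  set r := b / (k * N') with hr
  have hr0 : 0 ≤ r := div_nonneg h3 (h3.trans h4)
  have hr1 : r ≤ 1 := div_le_one_of_le₀ h4 (h3.trans h4)
  have hb : b = r * (k * N') := by
    rcases eq_or_ne (k * N') 0 with h | h
    · rw [h] at h4 ⊢
      rw [mul_zero]
      exact le_antisymm h4 h3
    · rw [hr, div_mul_cancel₀ _ h]
  have e : a / (k * N) - r = ((a - b) + r * k * (N' - N)) / (k * N) := by
    have e1 : (a - b) + r * k * (N' - N) = a - r * (k * N) := by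
      linear_combination -hb
    rw [e1]
    clear_value r
    field_simp
  rw [e, abs_div, abs_of_pos (show 0 < k * N by positivity), div_le_div_iff₀ (by positivity) hN]
  have h5 : |(a - b) + r * k * (N' - N)| ≤ 5 * B + k * B := by
    refine (abs_add_le _ _).trans (add_le_add h1 ?_)
    rw [abs_mul, abs_of_nonneg (by positivity), abs_sub_comm]
    have : r * k ≤ 1 * k := by gcongr
    rw [one_mul] at this
    gcongr
  have h6 : 5 * B + k * B ≤ 6 * B * k := by nlinarith
  calc _ ≤ (6 * B * k) * N := by gcongr; exact h5.trans h6
    _ = _ := by ring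

end det

open Classical in
lemma uniform_apply {n : ℕ} (d : Fin n → ℕ) (P : Matching d → Prop) :
    uniformMatching d {σ | P σ} =
      (Fintype.card (Matching d) : ℝ≥0∞)⁻¹ * ((Finset.univ.filter P).card : ℝ≥0∞) := by
  unfold uniformMatching
  rw [Measure.smul_apply, smul_eq_mul, Nat.card_eq_fintype_card]
  congr 1
  have h : {σ | P σ} = ((Finset.univ.filter P : Finset (Matching d)) : Set (Matching d)) := by
    ext σ; simp
  rw [h, Measure.count_apply_finset' (MeasurableSpace.measurableSet_top)]

lemma uniform_le_one {n : ℕ} (d : Fin n → ℕ) (P : Matching d → Prop) :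
    uniformMatching d {σ | P σ} ≤ 1 := by
  classical
  rw [uniform_apply, mul_comm, ← div_eq_mul_inv]
  apply ENNReal.div_le_of_le_mul
  rw [one_mul]
  exact_mod_cast Finset.card_le_univ _

lemma uniform_markov {n : ℕ} (d : Fin n → ℕ) (P : Matching d → Prop) (X : Matching d → ℝ)
    (hX : ∀ σ, 0 ≤ X σ) (t b : ℝ) (ht : 0 < t) (hP : ∀ σ, P σ → t ≤ X σ)
    (hsum : ∑ σ, X σ ≤ b * Fintype.card (Matching d)) :
    uniformMatching d {σ | P σ} ≤ ENNReal.ofReal (b / t) := by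
  classical
  rw [uniform_apply, mul_comm, ← div_eq_mul_inv]
  have h1 : ((Finset.univ.filter P).card : ℝ) * t ≤ b * Fintype.card (Matching d) := by
    refine le_trans ?_ hsum
    rw [← nsmul_eq_mul]
    refine (Finset.card_nsmul_le_sum _ X t ?_).trans ?_
    · intro σ hσ
      simp only [Finset.mem_filter, Finset.mem_univ, true_and] at hσ
      exact hP σ hσ
    · exact Finset.sum_le_sum_of_subset_of_nonneg (Finset.subset_univ _) fun σ _ _ => hX σ
  have h2 : ((Finset.univ.filter P).card : ℝ) ≤ (b / t) * Fintype.card (Matching d) := by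
    rw [div_mul_eq_mul_div, le_div_iff₀ ht]
    exact h1
  apply ENNReal.div_le_of_le_mul
  have h3 := ENNReal.ofReal_le_ofReal h2
  rw [ENNReal.ofReal_natCast] at h3
  refine h3.trans ?_
  rw [ENNReal.ofReal_mul' (Nat.cast_nonneg _), ENNReal.ofReal_natCast]

lemma uniform_bound {n : ℕ} (d : Fin n → ℕ) (k : ℕ) (hk : 1 ≤ k) (δ : ℝ) (hδ : 0 < δ)
    (s : ℝ) (hs : 6 ≤ s) (hcnt : s ≤ cnt d k) (M M' : ℕ) :
    uniformMatching d {σ | δ < |ANNR (eraseDeg (cmEdges d σ)) (erase (cmEdges d σ)) k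
        - ANNR d (cmEdges d σ) k|} ≤
      ENNReal.ofReal ((tailSum d M + (2 * (M : ℝ) ^ 2 + 4 * (M : ℝ) ^ 2 * M'
        + 4 * (M : ℝ) ^ 2 * tailSum d M')) / (δ * s / 6)) := by
  have hk' : (1 : ℝ) ≤ k := by exact_mod_cast hk
  have hL : 6 ≤ degSum d := by
    have h1 := k_cnt_le d k
    have h2 : (6 : ℝ) ≤ degSum d := by nlinarith
    exact_mod_cast h2
  refine uniform_markov d _ (fun σ => badSum d (cmEdges d σ)) (fun σ => badSum_nonneg _ _) _ _
    (by positivity) ?_ (sum_badSum_le d hL M M')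
  intro σ hσ
  have hN : 0 < cnt d k := by linarith
  have h := ANNR_diff d (cmEdges d σ) (cmEdges_sum d σ) (cmEdges_symm d σ) k hk hN
  have h2 := hσ.trans_le h
  rw [lt_div_iff₀ hN] at h2
  have : δ * s ≤ δ * cnt d k := by gcongr
  linarith

/-- Dominating function for the truncated degrees. -/
noncomputable def hTail (M x : ℕ) : ℝ := if M ≤ x then (x : ℝ) + 1 else 0

lemma hTail_nonneg (M x : ℕ) : 0 ≤ hTail M x := by
  unfold hTail
  split_ifs <;> positivity

lemma tailSum_parity {n : ℕ} (x : Fin n → ℕ) (M : ℕ) :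
    tailSum (parityFix n x) M ≤ ∑ i, hTail M (x i) := by
  unfold tailSum
  refine Finset.sum_le_sum fun i _ => ?_
  have h : parityFix n x i ≤ x i + 1 := by
    unfold parityFix
    split_ifs <;> omega
  have h' : (parityFix n x i : ℝ) ≤ x i + 1 := by exact_mod_cast h
  unfold hTail
  split_ifs with h1 h2 h2
  · exact h'
  · omega
  · positivity
  · exact le_rfl

lemma cnt_parity {n : ℕ} (x : Fin n → ℕ) (k : ℕ) :
    cnt x k - 1 ≤ cnt (parityFix n x) k := by
  have h : cnt x k - cnt (parityFix n x) k ≤ ∑ i : Fin n, if (i : ℕ) = n - 1 then (1 : ℝ) else 0 := by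
    unfold cnt
    rw [← Finset.sum_sub_distrib]
    refine Finset.sum_le_sum fun i _ => ?_
    by_cases hi : (i : ℕ) = n - 1
    · rw [if_pos hi]
      split_ifs <;> norm_num
    · have : parityFix n x i = x i := by
        unfold parityFix
        rw [if_neg]
        exact fun h => hi h.1
      rw [this, sub_self, if_neg hi]
  have h2 : (∑ i : Fin n, if (i : ℕ) = n - 1 then (1 : ℝ) else 0) ≤ 1 := by
    rw [Finset.sum_boole]
    have : (Finset.univ.filter (fun i : Fin n => (i : ℕ) = n - 1)).card ≤ 1 := by
      rw [Finset.card_le_one]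
      intro a ha b hb
      simp only [Finset.mem_filter, Finset.mem_univ, true_and] at ha hb
      exact Fin.ext (ha.trans hb.symm)
    exact_mod_cast this
  linarith

lemma integral_pi_eval (ν : Measure ℕ) [IsProbabilityMeasure ν] (n : ℕ) (i : Fin n) (Y : ℕ → ℝ) :
    ∫ x : Fin n → ℕ, Y (x i) ∂(Measure.pi fun _ : Fin n => ν) = ∫ x, Y x ∂ν := by
  have h : ∫ x, Y x ∂((Measure.pi fun _ : Fin n => ν).map (Function.eval i)) =
      ∫ x : Fin n → ℕ, Y (x i) ∂(Measure.pi fun _ : Fin n => ν) :=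
    integral_map (measurable_pi_apply i).aemeasurable
      Measurable.of_discrete.aestronglyMeasurable
  rw [(measurePreserving_eval (fun _ : Fin n => ν) i).map_eq] at h
  exact h.symm

lemma cnt_concentration (ν : Measure ℕ) [IsProbabilityMeasure ν] (k : ℕ) (p : ℝ)
    (hp : p = (ν {k}).toReal) (hp0 : 0 < p) :
    ∃ V : ℝ, ∀ n : ℕ, 4 ≤ n * p →
      (Measure.pi fun _ : Fin n => ν) {x | cnt (parityFix n x) k < p / 4 * n} ≤
        ENNReal.ofReal (V / n) := by
  set Y : ℕ → ℝ := fun x => if x = k then 1 else 0 with hY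
  have hYm : MemLp Y 2 ν := by
    refine MemLp.of_bound (Measurable.of_discrete.aestronglyMeasurable) 1 ?_
    refine Eventually.of_forall fun x => ?_
    simp only [hY]
    split_ifs <;> simp
  have hYint : ∫ x, Y x ∂ν = p := by
    have : Y = Set.indicator {k} (fun _ => (1 : ℝ)) := by
      ext x
      simp [hY, Set.indicator_apply]
    rw [this, integral_indicator (measurableSet_singleton k)]
    simp [hp, Measure.real]
  refine ⟨4 * ProbabilityTheory.variance Y ν / p ^ 2, ?_⟩
  intro n hn
  have hn0 : 0 < n := by
    rcases Nat.eq_zero_or_pos n with rfl | h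
    · norm_num at hn
    · exact h
  have hn0' : (0 : ℝ) < n := by exact_mod_cast hn0
  set X : (Fin n → ℕ) → ℝ := ∑ i : Fin n, fun ω : Fin n → ℕ => Y (ω i) with hX
  have hmp : ∀ i : Fin n, MemLp (fun ω : Fin n → ℕ => Y (ω i)) 2 (Measure.pi fun _ : Fin n => ν) :=
    fun i => hYm.comp_measurePreserving (measurePreserving_eval (fun _ : Fin n => ν) i)
  have hXm : MemLp X 2 (Measure.pi fun _ : Fin n => ν) :=
    memLp_finsetSum' _ fun i _ => hmp i
  have hXcnt : ∀ x, X x = cnt x k := by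
    intro x
    simp [hX, hY, cnt]
  have hmean : ∫ x, X x ∂(Measure.pi fun _ : Fin n => ν) = n * p := by
    simp only [hX, Finset.sum_apply]
    rw [integral_finsetSum]
    · have : ∀ i : Fin n, ∫ x : Fin n → ℕ, Y (x i) ∂(Measure.pi fun _ : Fin n => ν) = p := by
        intro i
        rw [integral_pi_eval, hYint]
      simp [this]
    · intro i _
      exact (hmp i).integrable (by norm_num)
  have hvar : ProbabilityTheory.variance X (Measure.pi fun _ : Fin n => ν)
      = n * ProbabilityTheory.variance Y ν := by
    rw [hX, ProbabilityTheory.variance_sum_pi (X := fun _ : Fin n => Y) (fun _ => hYm)]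
    simp
  have hch := ProbabilityTheory.meas_ge_le_variance_div_sq hXm
    (show 0 < (n : ℝ) * p / 2 by positivity)
  refine (measure_mono ?_).trans (hch.trans (le_of_eq ?_))
  · intro x hx
    have hx' : cnt (parityFix n x) k < p / 4 * n := hx
    have h1 := cnt_parity x k
    change (n : ℝ) * p / 2 ≤ |X x - _|
    rw [hmean, hXcnt, abs_sub_comm]
    refine le_trans ?_ (le_abs_self _)
    linarith
  · rw [hvar]
    congr 1
    field_simp
    norm_num

lemma integrable_id (ν : Measure ℕ) [IsProbabilityMeasure ν] (f : ℕ → ℝ)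
    (hf : ∀ k, f k = (ν {k}).toReal) (hs : Summable fun k : ℕ => (k : ℝ) * f k) :
    Integrable (fun x : ℕ => (x : ℝ) + 1) ν := by
  refine Integrable.add ?_ (integrable_const 1)
  refine ⟨Measurable.of_discrete.aestronglyMeasurable, ?_⟩
  rw [HasFiniteIntegral, lintegral_countable']
  have h : ∀ x : ℕ, ‖(x : ℝ)‖ₑ * ν {x} = ENNReal.ofReal ((x : ℝ) * f x) := by
    intro x
    rw [ENNReal.ofReal_mul (Nat.cast_nonneg _), hf, ENNReal.ofReal_toReal (measure_ne_top _ _),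
      Real.enorm_eq_ofReal (Nat.cast_nonneg _)]
  simp_rw [h]
  exact hs.tsum_ofReal_ne_top.lt_top

lemma hTail_integrable (ν : Measure ℕ) [IsProbabilityMeasure ν]
    (hi : Integrable (fun x : ℕ => (x : ℝ) + 1) ν) (M : ℕ) : Integrable (hTail M) ν := by
  refine hi.mono' Measurable.of_discrete.aestronglyMeasurable (Eventually.of_forall fun x => ?_)
  rw [Real.norm_of_nonneg (hTail_nonneg M x)]
  unfold hTail
  split_ifs
  · exact le_rfl
  · positivity

lemma hTail_tendsto (ν : Measure ℕ) [IsProbabilityMeasure ν]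
    (hi : Integrable (fun x : ℕ => (x : ℝ) + 1) ν) :
    Tendsto (fun M : ℕ => ∫ x, hTail M x ∂ν) atTop (nhds 0) := by
  have : (0 : ℝ) = ∫ _x : ℕ, (0 : ℝ) ∂ν := by simp
  rw [this]
  refine tendsto_integral_of_dominated_convergence (fun x : ℕ => (x : ℝ) + 1)
    (fun M => Measurable.of_discrete.aestronglyMeasurable) hi ?_ ?_
  · intro M
    refine Eventually.of_forall fun x => ?_
    rw [Real.norm_of_nonneg (hTail_nonneg M x)]
    unfold hTail
    split_ifs
    · exact le_rfl
    · positivity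
  · refine Eventually.of_forall fun x => ?_
    refine tendsto_const_nhds.congr' ?_
    filter_upwards [eventually_gt_atTop x] with M hM
    unfold hTail
    rw [if_neg (by omega)]

lemma hTail_sum (ν : Measure ℕ) [IsProbabilityMeasure ν]
    (hi : Integrable (fun x : ℕ => (x : ℝ) + 1) ν) (M n : ℕ) :
    Integrable (fun x : Fin n → ℕ => ∑ i, hTail M (x i)) (Measure.pi fun _ : Fin n => ν) ∧
    ∫ x : Fin n → ℕ, ∑ i, hTail M (x i) ∂(Measure.pi fun _ : Fin n => ν)
      = n * ∫ x, hTail M x ∂ν := by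
  have h1 : ∀ i : Fin n, Integrable (fun x : Fin n → ℕ => hTail M (x i))
      (Measure.pi fun _ : Fin n => ν) := fun i =>
    (measurePreserving_eval (fun _ : Fin n => ν) i).integrable_comp_of_integrable
      (hTail_integrable ν hi M)
  refine ⟨integrable_finsetSum _ fun i _ => h1 i, ?_⟩
  rw [integral_finsetSum _ fun i _ => h1 i]
  have : ∀ i : Fin n, ∫ x : Fin n → ℕ, hTail M (x i) ∂(Measure.pi fun _ : Fin n => ν)
      = ∫ x, hTail M x ∂ν := by
    intro i
    exact integral_pi_eval ν n i (hTail M)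
  simp [this]

lemma cmLaw_apply (n : ℕ) (ν : Measure ℕ) (P : (Fin n → ℕ) × (Fin n → Fin n → ℕ) → Prop) :
    cmLaw n ν {p | P p} = ∫⁻ x, uniformMatching (parityFix n x)
      {σ | P (parityFix n x, cmEdges (parityFix n x) σ)} ∂(Measure.pi fun _ : Fin n => ν) := by
  unfold cmLaw iidLaw
  rw [Measure.bind_apply (Set.to_countable _).measurableSet
    (Measurable.of_discrete.aemeasurable), lintegral_map Measurable.of_discrete
    Measurable.of_discrete]
  refine lintegral_congr fun x => ?_
  rw [Measure.map_apply (fun _ _ => MeasurableSpace.measurableSet_top)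
    (Set.to_countable _).measurableSet]
  rfl

lemma prob_bound (ν : Measure ℕ) [IsProbabilityMeasure ν]
    (hi : Integrable (fun x : ℕ => (x : ℝ) + 1) ν) (k : ℕ) (hk : 1 ≤ k) (δ : ℝ) (hδ : 0 < δ)
    (c : ℝ) (hc : 0 < c) (n : ℕ) (hn : 6 ≤ c * n) (M M' : ℕ) :
    (cmLaw n ν) {p : (Fin n → ℕ) × (Fin n → Fin n → ℕ) |
            δ < |ANNR (eraseDeg p.2) (erase p.2) k - ANNR p.1 p.2 k|} ≤
      (Measure.pi fun _ : Fin n => ν) {x | cnt (parityFix n x) k < c * n} +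
      ENNReal.ofReal ((n * (∫ x, hTail M x ∂ν) + (2 * (M : ℝ) ^ 2 + 4 * (M : ℝ) ^ 2 * M'
        + 4 * (M : ℝ) ^ 2 * (n * ∫ x, hTail M' x ∂ν))) / (δ * (c * n) / 6)) := by
  rw [cmLaw_apply]
  set A : Set (Fin n → ℕ) := {x | cnt (parityFix n x) k < c * n} with hA
  have hAm : MeasurableSet A := (Set.to_countable _).measurableSet
  set G : (Fin n → ℕ) → ℝ := fun x => ((∑ i, hTail M (x i)) + (2 * (M : ℝ) ^ 2
    + 4 * (M : ℝ) ^ 2 * M' + 4 * (M : ℝ) ^ 2 * ∑ i, hTail M' (x i))) / (δ * (c * n) / 6) with hG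
  obtain ⟨i1, e1⟩ := hTail_sum ν hi M n
  obtain ⟨i2, e2⟩ := hTail_sum ν hi M' n
  have hden : 0 < δ * (c * n) / 6 := by positivity
  have hs0 : ∀ (M : ℕ) (x : Fin n → ℕ), 0 ≤ ∑ i, hTail M (x i) := fun M x =>
    Finset.sum_nonneg fun i _ => hTail_nonneg _ _
  have hG0 : ∀ x, 0 ≤ G x := by
    intro x
    have := hs0 M x
    have := hs0 M' x
    simp only [hG]
    positivity
  have hGi : Integrable G (Measure.pi fun _ : Fin n => ν) :=
    (i1.add ((integrable_const _).add (i2.const_mul _))).div_const _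
  have hGe : ∫ x, G x ∂(Measure.pi fun _ : Fin n => ν) =
      (n * (∫ x, hTail M x ∂ν) + (2 * (M : ℝ) ^ 2 + 4 * (M : ℝ) ^ 2 * M'
        + 4 * (M : ℝ) ^ 2 * (n * ∫ x, hTail M' x ∂ν))) / (δ * (c * n) / 6) := by
    simp only [hG]
    have i3 : Integrable (fun x : Fin n → ℕ => 2 * (M : ℝ) ^ 2 + 4 * (M : ℝ) ^ 2 * M'
        + 4 * (M : ℝ) ^ 2 * ∑ i, hTail M' (x i)) (Measure.pi fun _ : Fin n => ν) :=
      (integrable_const _).add (i2.const_mul _)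
    rw [integral_div, integral_add i1 i3,
      integral_add (integrable_const _) (i2.const_mul _), integral_const_mul, e1, e2]
    simp
  rw [← hGe, ofReal_integral_eq_lintegral_ofReal hGi (Eventually.of_forall hG0)]
  have hind : (Measure.pi fun _ : Fin n => ν) A =
      ∫⁻ x, A.indicator 1 x ∂(Measure.pi fun _ : Fin n => ν) := by
    rw [lintegral_indicator_one hAm]
  rw [hind, ← lintegral_add_left Measurable.of_discrete]
  refine lintegral_mono fun x => ?_
  by_cases hx : x ∈ A
  · rw [Set.indicator_of_mem hx]
    exact (uniform_le_one _ _).trans le_self_add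
  · rw [Set.indicator_of_notMem hx, zero_add]
    have hx' : c * n ≤ cnt (parityFix n x) k := not_lt.mp hx
    refine (uniform_bound (parityFix n x) k hk δ hδ (c * n) hn hx' M M').trans ?_
    apply ENNReal.ofReal_le_ofReal
    simp only [hG]
    have h1 := tailSum_parity x M
    have h2 := tailSum_parity x M'
    gcongr

/-- For `𝒟` regularly varying with exponent `γ > 1`, the difference
between the ANNR in the erased configuration model and in the configuration model
vanishes in probability: for any `δ > 0` and `k` with `f^*(k) > 0`,
`P(|Θ̂_n(k) − Θ_n(k)| > δ) → 0`. -/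
theorem stmt12 (ν : Measure ℕ) [IsProbabilityMeasure ν] (f : ℕ → ℝ)
    (hf : ∀ k, f k = (ν {k}).toReal) (hzero : ν {0} = 0)
    (γ : ℝ) (hγ : 1 < γ)
    (l : ℝ → ℝ) (hsv : SlowlyVarying l) (hmono : EventuallyMonotone l)
    (hreg : ∀ k : ℕ, 1 ≤ k → f k = l k * (k : ℝ) ^ (-γ - 1))
    (k : ℕ) (hk : 0 < sizeBiased f k)
    (δ : ℝ) (hδ : 0 < δ) :
    Tendsto (fun n : ℕ =>
        ((cmLaw n ν) {p : (Fin n → ℕ) × (Fin n → Fin n → ℕ) |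
            δ < |ANNR (eraseDeg p.2) (erase p.2) k - ANNR p.1 p.2 k|}).toReal)
      atTop (nhds 0) := by
  have hmean : meanPMF f ≠ 0 := by
    intro h
    rw [sizeBiased, h, div_zero] at hk
    exact lt_irrefl _ hk
  have hsum : Summable fun j : ℕ => (j : ℝ) * f j := by
    by_contra h
    exact hmean (tsum_eq_zero_of_not_summable h)
  have hk1 : 1 ≤ k := by
    rcases Nat.eq_zero_or_pos k with rfl | h
    · simp [sizeBiased] at hk
    · exact h
  have hfk0 : 0 ≤ f k := by rw [hf]; exact ENNReal.toReal_nonneg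
  have hfk : 0 < f k := by
    rcases hfk0.eq_or_lt with h | h
    · rw [sizeBiased, ← h] at hk
      simp at hk
    · exact h
  have hi := integrable_id ν f hf hsum
  obtain ⟨V, hV⟩ := cnt_concentration ν k (f k) (hf k) hfk
  have hT := hTail_tendsto ν hi
  set a : ℝ := δ * (f k / 4) / 6 with ha
  have ha0 : 0 < a := by positivity
  rw [Metric.tendsto_atTop]
  intro ε hε
  obtain ⟨M, hM⟩ : ∃ M : ℕ, ∫ x, hTail M x ∂ν < a * (ε / 8) :=
    (hT.eventually (gt_mem_nhds (show 0 < a * (ε / 8) by positivity))).exists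
  have hT2 : Tendsto (fun M' : ℕ => 4 * (M : ℝ) ^ 2 * ∫ x, hTail M' x ∂ν) atTop (nhds 0) := by
    simpa using hT.const_mul (4 * (M : ℝ) ^ 2)
  obtain ⟨M', hM'⟩ : ∃ M' : ℕ, 4 * (M : ℝ) ^ 2 * ∫ x, hTail M' x ∂ν < a * (ε / 8) :=
    (hT2.eventually (gt_mem_nhds (show 0 < a * (ε / 8) by positivity))).exists
  have hA : ∀ᶠ n : ℕ in atTop, (2 * (M : ℝ) ^ 2 + 4 * (M : ℝ) ^ 2 * M') / a / n < ε / 8 :=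
    (tendsto_const_div_atTop_nhds_zero_nat _).eventually (gt_mem_nhds (by positivity))
  have hB : ∀ᶠ n : ℕ in atTop, V / n < ε / 8 :=
    (tendsto_const_div_atTop_nhds_zero_nat _).eventually (gt_mem_nhds (by positivity))
  have hC : ∀ᶠ n : ℕ in atTop, 24 / f k ≤ (n : ℝ) :=
    tendsto_natCast_atTop_atTop.eventually_ge_atTop _
  obtain ⟨n0, hn0⟩ := eventually_atTop.1 (hA.and (hB.and (hC.and (eventually_gt_atTop 0))))
  refine ⟨n0, fun n hn => ?_⟩
  obtain ⟨h1, h2, h3, h4⟩ := hn0 n hn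
  have h4' : (0 : ℝ) < n := by exact_mod_cast h4
  rw [div_le_iff₀ hfk] at h3
  have hb := prob_bound ν hi k hk1 δ hδ (f k / 4) (by positivity) n (by linarith) M M'
  have hb2 := hV n (by linarith)
  rw [Real.dist_eq, sub_zero, abs_of_nonneg ENNReal.toReal_nonneg]
  have hb3 : ENNReal.ofReal ((n * (∫ x, hTail M x ∂ν) + (2 * (M : ℝ) ^ 2 + 4 * (M : ℝ) ^ 2 * M'
        + 4 * (M : ℝ) ^ 2 * (n * ∫ x, hTail M' x ∂ν))) / (δ * (f k / 4 * n) / 6)) ≤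
      ENNReal.ofReal (3 * ε / 8) := by
    apply ENNReal.ofReal_le_ofReal
    have e : δ * (f k / 4 * n) / 6 = a * n := by rw [ha]; ring
    rw [e, div_le_iff₀ (by positivity)]
    rw [div_div, div_lt_iff₀ (by positivity)] at h1
    nlinarith
  have hb4 : ENNReal.ofReal (V / n) ≤ ENNReal.ofReal (ε / 8) := ENNReal.ofReal_le_ofReal h2.le
  have hfin := hb.trans (add_le_add (hb2.trans hb4) hb3)
  rw [← ENNReal.ofReal_add (by positivity) (by positivity)] at hfin
  have := ENNReal.toReal_le_of_le_ofReal (by positivity) hfin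
  linarith

end ANNDPaper
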